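/- arXiv:1407.3725 — 2 statements merged into one kernel-verified Lean document; each statement's English description precedes it below -/
import Mathlib

section
/- Fix an integer n ≥ 0 and real constants c > 0 and κ > 0. Define Φ₁ : ℂ³ → ℝ by Φ₁(x,y,z) = (κ/4)|x|² + (κ/4)|y|² + (1/4)|z|², define w : ℂ³ → ℂ by w(x,y,z) = c(xy+1) − c²zⁿ, and define Φ_X : ℂ³ → ℝ by Φ_X(x,y,z) = Φ₁(x,y,z) + (1/4)|w(x,y,z)|². Then for every bounded subset B ⊆ ℂ³ there exist constants C > 0 and M ∈ ℝ such that the function φ = C·Φ₁ − Φ_X is bounded above by M on B, and there exists a connected component Ω of the sublevel set φ⁻¹((−∞, M]) such that B ⊆ Ω and Ω is compact. -/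
/-!
Write `φ = D·Φ₁ − |w|²/4` with `D = C − 1`. Choose `r ≥ 1` bounding `Φ₁` on `B` and put `M = D·r`.
The ellipsoid `{Φ₁ ≤ r}` is star-shaped about `0` and lies in `{φ ≤ M}` because `φ ≤ D·Φ₁`, so it
lies in the connected component `Ω` of `0` in `{φ ≤ M}`. On the larger ellipsoid `{Φ₁ = 2r}` the
continuous function `|w|²/4` is bounded by some `A`, independent of `D`; taking `D = A + 1` gives
`φ ≥ 2Dr − A > Dr = M` there. This level set is a barrier: a connected subset of `{φ ≤ M}`
containing `0` cannot reach `Φ₁ = 2r` (`connectedComponentIn_subset_of_barrier`). Hence `Ω` is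
bounded, and it is closed as a component of a closed set.
-/

open Metric Set

/-- `Ω` is a connected component of `S`: a maximal (pre)connected nonempty subset of `S`. -/
def IsConnCompOf {α : Type*} [TopologicalSpace α] (Ω S : Set α) : Prop :=
  Ω.Nonempty ∧ IsPreconnected Ω ∧ Ω ⊆ S ∧
    ∀ Ω' : Set α, IsPreconnected Ω' → Ω ⊆ Ω' → Ω' ⊆ S → Ω' = Ω

/-- The Kähler potential `Φ₁(x,y,z) = (κ/4)|x|² + (κ/4)|y|² + (1/4)|z|²`. -/
noncomputable def Phi1 (κ : ℝ) (p : ℂ × ℂ × ℂ) : ℝ :=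
  κ / 4 * ‖p.1‖ ^ 2 + κ / 4 * ‖p.2.1‖ ^ 2 + 1 / 4 * ‖p.2.2‖ ^ 2

/-- `w(x,y,z) = c(xy+1) − c²zⁿ`. -/
noncomputable def wCoord (n : ℕ) (c : ℝ) (p : ℂ × ℂ × ℂ) : ℂ :=
  (c : ℂ) * (p.1 * p.2.1 + 1) - (c : ℂ) ^ 2 * p.2.2 ^ n

/-- The Kähler potential `Φ_X = Φ₁ + (1/4)|w|²`. -/
noncomputable def PhiX (n : ℕ) (c κ : ℝ) (p : ℂ × ℂ × ℂ) : ℝ :=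
  Phi1 κ p + 1 / 4 * ‖wCoord n c p‖ ^ 2

lemma continuous_Phi1 (κ : ℝ) : Continuous (Phi1 κ) := by
  unfold Phi1; fun_prop

lemma continuous_wCoord (n : ℕ) (c : ℝ) : Continuous (wCoord n c) := by
  unfold wCoord; fun_prop

lemma continuous_PhiX (n : ℕ) (c κ : ℝ) : Continuous (PhiX n c κ) := by
  have h1 := continuous_Phi1 κ
  have h2 := continuous_wCoord n c
  unfold PhiX; fun_prop

lemma Phi1_zero (κ : ℝ) : Phi1 κ 0 = 0 := by simp [Phi1]

lemma Phi1_smul (κ t : ℝ) (p : ℂ × ℂ × ℂ) : Phi1 κ (t • p) = t ^ 2 * Phi1 κ p := by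
  simp only [Phi1, Prod.smul_fst, Prod.smul_snd, norm_smul, mul_pow, Real.norm_eq_abs, sq_abs]
  ring

lemma Phi1_nonneg {κ : ℝ} (hκ : 0 < κ) (p : ℂ × ℂ × ℂ) : 0 ≤ Phi1 κ p := by
  unfold Phi1; positivity

lemma isCompact_Phi1_le {κ : ℝ} (hκ : 0 < κ) (R : ℝ) : IsCompact {p | Phi1 κ p ≤ R} := by
  refine Metric.isCompact_of_isClosed_isBounded
    (isClosed_le (continuous_Phi1 κ) continuous_const) ?_
  refine (Metric.isBounded_closedBall (x := (0 : ℂ × ℂ × ℂ))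
    (r := max (1 + 4 * R / κ) (1 + 4 * R))).subset ?_
  intro p hp
  simp only [mem_ofPred_eq, Phi1] at hp
  have h1 : 0 ≤ κ * ‖p.1‖ ^ 2 := by positivity
  have h2 : 0 ≤ κ * ‖p.2.1‖ ^ 2 := by positivity
  have h3 : 0 ≤ ‖p.2.2‖ ^ 2 := by positivity
  have e1 : ‖p.1‖ ^ 2 ≤ 4 * R / κ := by rw [le_div_iff₀ hκ]; linarith
  have e2 : ‖p.2.1‖ ^ 2 ≤ 4 * R / κ := by rw [le_div_iff₀ hκ]; linarith
  -- The estimate `a ≤ 1 + a ^ 2` avoids square roots in the radius.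
  have key : ∀ a : ℝ, a ≤ 1 + a ^ 2 := fun a => by nlinarith [sq_nonneg (a - 1), sq_nonneg a]
  rw [mem_closedBall_zero_iff, Prod.norm_def, Prod.norm_def]
  refine max_le (le_max_of_le_left ?_) (max_le (le_max_of_le_left ?_) (le_max_of_le_right ?_))
  · linarith [key ‖p.1‖]
  · linarith [key ‖p.2.1‖]
  · linarith [key ‖p.2.2‖]

lemma isConnCompOf_connectedComponentIn {α : Type*} [TopologicalSpace α] {S : Set α} {x : α}
    (hx : x ∈ S) : IsConnCompOf (connectedComponentIn S x) S :=
  ⟨⟨x, mem_connectedComponentIn hx⟩, isPreconnected_connectedComponentIn,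
    connectedComponentIn_subset S x, fun _ hc hsub hS =>
      (hc.subset_connectedComponentIn (hsub (mem_connectedComponentIn hx)) hS).antisymm hsub⟩

lemma isClosed_connectedComponentIn {α : Type*} [TopologicalSpace α] {S : Set α} {x : α}
    (hS : IsClosed S) (hx : x ∈ S) : IsClosed (connectedComponentIn S x) :=
  isClosed_of_closure_subset <|
    isPreconnected_connectedComponentIn.closure.subset_connectedComponentIn
      (subset_closure (mem_connectedComponentIn hx))
      (closure_minimal (connectedComponentIn_subset S x) hS)

/-- If `S` misses the level set `{Φ₁ = R}` with `R > 0`, then by the intermediate value theorem the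
component of `0` in `S` stays inside the ellipsoid `{Φ₁ ≤ R}`. -/
lemma connectedComponentIn_subset_of_barrier {κ R : ℝ} (hR : 0 < R)
    {S : Set (ℂ × ℂ × ℂ)} (h0 : 0 ∈ S) (hS : ∀ p ∈ S, Phi1 κ p ≠ R) :
    connectedComponentIn S 0 ⊆ {p | Phi1 κ p ≤ R} := by
  intro p hp
  by_contra hlt
  have hlt' : R < Phi1 κ p := not_le.mp hlt
  obtain ⟨q, hq, hqR⟩ := isPreconnected_connectedComponentIn.intermediate_value
    (mem_connectedComponentIn h0) hp (continuous_Phi1 κ).continuousOn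
    (show R ∈ Icc (Phi1 κ 0) (Phi1 κ p) from ⟨by rw [Phi1_zero]; exact hR.le, hlt'.le⟩)
  exact hS q (connectedComponentIn_subset S 0 hq) hqR

/-- Lemma 4.1 of the paper: for every bounded subset `B ⊆ ℂ³` there are constants
`C > 0` and `M` such that `φ = C·Φ₁ − Φ_X` is bounded above by `M` on `B`, and a
connected component `Ω` of the sublevel set `{φ ≤ M}` containing `B` is compact. -/
theorem barrier_lemma (n : ℕ) (c κ : ℝ) (hc : 0 < c) (hκ : 0 < κ)
    (B : Set (ℂ × ℂ × ℂ)) (hB : Bornology.IsBounded B) :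
    ∃ C : ℝ, 0 < C ∧ ∃ M : ℝ,
      (∀ p ∈ B, C * Phi1 κ p - PhiX n c κ p ≤ M) ∧
      ∃ Ω : Set (ℂ × ℂ × ℂ),
        B ⊆ Ω ∧ IsCompact Ω ∧
        IsConnCompOf Ω {p : ℂ × ℂ × ℂ | C * Phi1 κ p - PhiX n c κ p ≤ M} := by
  obtain ⟨r, hr1, hr⟩ : ∃ r : ℝ, 1 ≤ r ∧ ∀ p ∈ B, Phi1 κ p ≤ r := by
    obtain ⟨r, hr⟩ := hB.isCompact_closure.bddAbove_image (continuous_Phi1 κ).continuousOn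
    exact ⟨max 1 r, le_max_left _ _, fun p hp =>
      le_max_of_le_right (hr (mem_image_of_mem _ (subset_closure hp)))⟩
  obtain ⟨A, hA0, hA⟩ : ∃ A : ℝ, 0 ≤ A ∧
      ∀ p, Phi1 κ p ≤ 2 * r → 1 / 4 * ‖wCoord n c p‖ ^ 2 ≤ A := by
    have hcont : Continuous fun p => 1 / 4 * ‖wCoord n c p‖ ^ 2 := by
      have := continuous_wCoord n c
      fun_prop
    obtain ⟨A, hA⟩ := (isCompact_Phi1_le hκ (2 * r)).bddAbove_image hcont.continuousOn
    exact ⟨max 0 A, le_max_left _ _, fun p hp =>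
      le_max_of_le_right (hA (mem_image_of_mem _ hp))⟩
  set S : Set (ℂ × ℂ × ℂ) := {p | (A + 2) * Phi1 κ p - PhiX n c κ p ≤ (A + 1) * r} with hSdef
  have hball : ∀ p, Phi1 κ p ≤ r → p ∈ S := by
    intro p hp
    have hw : 0 ≤ ‖wCoord n c p‖ ^ 2 := by positivity
    have := mul_le_mul_of_nonneg_left hp (by linarith : 0 ≤ A + 1)
    simp only [hSdef, mem_ofPred_eq, PhiX]
    linarith
  have h0 : (0 : ℂ × ℂ × ℂ) ∈ S := hball 0 (by rw [Phi1_zero]; linarith)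
  have hbar : ∀ p ∈ S, Phi1 κ p ≠ 2 * r := by
    intro p hp hpr
    have hw := hA p hpr.le
    simp only [hSdef, mem_ofPred_eq, PhiX, hpr] at hp
    nlinarith
  have hSclosed : IsClosed S :=
    isClosed_le (((continuous_Phi1 κ).const_mul _).sub (continuous_PhiX n c κ)) continuous_const
  refine ⟨A + 2, by linarith, (A + 1) * r, fun p hp => hball p (hr p hp),
    connectedComponentIn S 0, ?_, ?_, isConnCompOf_connectedComponentIn h0⟩
  · intro p hp
    refine (convex_segment (𝕜 := ℝ) 0 p).isPreconnected.subset_connectedComponentIn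
      (left_mem_segment ℝ 0 p) ?_ (right_mem_segment ℝ 0 p)
    rw [segment_eq_image]
    rintro _ ⟨t, ⟨ht0, ht1⟩, rfl⟩
    apply hball
    simp only [smul_zero, zero_add]
    rw [Phi1_smul]
    have ht : t ^ 2 ≤ 1 := pow_le_one₀ ht0 ht1
    exact (mul_le_of_le_one_left (Phi1_nonneg hκ p) ht).trans (hr p hp)
  · exact (isCompact_Phi1_le hκ (2 * r)).of_isClosed_subset
      (isClosed_connectedComponentIn hSclosed h0)
      (connectedComponentIn_subset_of_barrier (by linarith) h0 hbar)
end

section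
/- Let k ≥ 0 be an integer and let t₁, …, t_k be distinct points of the open unit disc D. Let g : ℂ → ℂ be continuous on the closed unit disc D̄ and holomorphic on D, such that for z ∈ D̄ one has g(z) = 0 if and only if z ∈ {t₁,…,t_k}, and each zero is simple (g′(t_j) ≠ 0 for all j). Fix x₀ ∈ ℂ with |x₀|² = |g(1)|. Then the set of pairs (x, y) of functions continuous on D̄ and holomorphic on D satisfying: (i) x(z)·y(z) = g(z) for all z ∈ D̄; (ii) |x(ζ)| = |y(ζ)| for all ζ with |ζ| = 1; and (iii) x(1) = x₀, has exactly 2^k elements. -/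
/-!
The *disc algebra* consists of the functions continuous on the closed unit disc and holomorphic on
the open disc, encoded as `DiffContOnCl ℂ f (ball 0 1)`. Write `B_S` for the Blaschke product with
zeros `t j`, `j ∈ S`, and `B` for the product over all indices. Dividing `g` by `B` leaves a
function which is zero-free on the closed disc, as the zeros of `g` are simple. Such a function has
a square root in the disc algebra, so `g = B * E ^ 2` with `E` zero-free
(`exists_eq_blaschkeProd_mul_sq`).

For each set of indices `S` the pair `x = c B_S E`, `y = c⁻¹ B_{Sᶜ} E`, with the unimodular constant
`c` fixed by `x 1 = x₀`, is a lift, and `S` is recovered from the zeros of `x`. Conversely, for a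
lift `(x, y)` let `S` be the set of `j` with `x (t j) = 0`; then `y (t j) = 0` for `j ∉ S`.
Factoring `x = B_S A` and `y = B_{Sᶜ} A'` gives `A A' = E ^ 2` on the closed disc and `|A| = |A'|`
on the circle, so `|A| = |E|` there, and the maximum principle yields `A = c E`
(`eq_const_mul_of_norm_eq`). Hence `A' = c⁻¹ E`, and lifts correspond to subsets of the `k` indices.
-/

open Metric Set

/-! ### Logarithms and square roots in the disc algebra -/

/-- A nowhere vanishing holomorphic function on a disc has a holomorphic logarithm: a primitive of
`F' / F`, suitably normalised at the centre. -/
theorem exists_log_of_ne_zero {F : ℂ → ℂ} {R : ℝ} (hR : 0 < R)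
    (hF : DifferentiableOn ℂ F (ball 0 R)) (h0 : ∀ z ∈ ball (0 : ℂ) R, F z ≠ 0) :
    ∃ L : ℂ → ℂ, DifferentiableOn ℂ L (ball 0 R) ∧
      ∀ z ∈ ball (0 : ℂ) R, Complex.exp (L z) = F z := by
  have hmem : (0 : ℂ) ∈ ball (0 : ℂ) R := mem_ball_self hR
  obtain ⟨L, hL0, hL⟩ := (((hF.deriv isOpen_ball).div hF h0).isExactOn_ball).with_val_at
    0 (Complex.log (F 0))
  refine ⟨L, fun z hz => (hL z hz).differentiableAt.differentiableWithinAt, ?_⟩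
  -- `F · exp (-L)` has derivative zero, so it keeps its value `1` at the centre.
  have hd : ∀ z ∈ ball (0 : ℂ) R, HasDerivAt (fun w => F w * Complex.exp (-L w)) 0 z := by
    intro z hz
    have hFz := ((hF z hz).differentiableAt (isOpen_ball.mem_nhds hz)).hasDerivAt
    refine (hFz.mul (hL z hz).neg.cexp).congr_deriv ?_
    change deriv F z * Complex.exp (-L z) +
      F z * (Complex.exp (-L z) * -(deriv F z / F z)) = 0
    have := h0 z hz
    field_simp
    ring
  intro z hz
  have key := isOpen_ball.is_const_of_deriv_eq_zero (convex_ball (0 : ℂ) R).isPreconnected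
    (fun w hw => (hd w hw).differentiableAt.differentiableWithinAt)
    (fun w hw => (hd w hw).deriv) hz hmem
  simp only [hL0, Complex.exp_neg, Complex.exp_log (h0 0 hmem), mul_inv_cancel₀ (h0 0 hmem)] at key
  exact ((mul_inv_eq_one₀ (Complex.exp_ne_zero _)).1 key).symm

/-- A nowhere vanishing function in the disc algebra has a square root in the disc algebra. By
uniform continuity `G z / G (r z)` lies in the disc of radius `1` about `1` once `r < 1` is close
to `1`, so it has a principal square root, while `z ↦ G (r z)` is holomorphic on a disc larger
than the closed unit disc and has a square root there because it has a logarithm. -/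
theorem exists_sqrt {G : ℂ → ℂ} (hG : DiffContOnCl ℂ G (ball 0 1))
    (h0 : ∀ z ∈ closedBall (0 : ℂ) 1, G z ≠ 0) :
    ∃ E : ℂ → ℂ, DiffContOnCl ℂ E (ball 0 1) ∧ ∀ z ∈ closedBall (0 : ℂ) 1, E z ^ 2 = G z := by
  have hGc := hG.continuousOn_ball
  have hK := isCompact_closedBall (0 : ℂ) 1
  obtain ⟨w, hw, hmin⟩ := hK.exists_isMinOn ⟨0, by simp⟩ hGc.norm
  have hm : 0 < ‖G w‖ := norm_pos_iff.2 (h0 w hw)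
  obtain ⟨δ, hδ, hunif⟩ := Metric.uniformContinuousOn_iff.1
    (hK.uniformContinuousOn_of_continuous hGc) _ hm
  obtain ⟨r, hr0, hr1, hrδ⟩ : ∃ r : ℝ, 0 < r ∧ r < 1 ∧ 1 - r < δ := by
    refine ⟨max (1 / 2) (1 - δ / 2), by positivity, ?_, ?_⟩
    · exact max_lt (by norm_num) (by linarith)
    · have := le_max_right (1 / 2) (1 - δ / 2)
      linarith
  have hscale : ∀ z ∈ ball (0 : ℂ) (1 / r), (r : ℂ) * z ∈ ball (0 : ℂ) 1 := by
    intro z hz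
    rw [mem_ball_zero_iff, lt_div_iff₀ hr0] at hz
    rw [mem_ball_zero_iff, norm_mul, Complex.norm_real, Real.norm_of_nonneg hr0.le, mul_comm]
    exact hz
  have hsub : closedBall (0 : ℂ) 1 ⊆ ball 0 (1 / r) :=
    closedBall_subset_ball (by rw [lt_div_iff₀ hr0]; linarith)
  have hrd : DifferentiableOn ℂ (fun z : ℂ => G (r * z)) (ball 0 (1 / r)) :=
    hG.differentiableOn.comp (by fun_prop) hscale
  obtain ⟨L, hL, hLexp⟩ := exists_log_of_ne_zero (R := 1 / r) (by positivity)
    hrd (fun z hz => h0 _ (ball_subset_closedBall (hscale z hz)))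
  have hr0' : ∀ z ∈ closedBall (0 : ℂ) 1, G (r * z) ≠ 0 := fun z hz =>
    h0 _ (ball_subset_closedBall (hscale z (hsub hz)))
  have hslit : ∀ z ∈ closedBall (0 : ℂ) 1, G z / G (r * z) ∈ Complex.slitPlane := by
    intro z hz
    have hrz := ball_subset_closedBall (hscale z (hsub hz))
    have hdist : dist z (r * z) < δ := by
      have h1 : z - r * z = ((1 - r : ℝ) : ℂ) * z := by push_cast; ring
      rw [dist_eq_norm, h1, norm_mul, Complex.norm_real, Real.norm_of_nonneg (by linarith)]
      rw [mem_closedBall_zero_iff] at hz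
      nlinarith
    have hlt := hunif z hz _ hrz hdist
    have : G z / G (r * z) = 1 + (G z - G (r * z)) / G (r * z) := by
      field_simp [hr0' z hz]; ring
    rw [this]
    apply Complex.mem_slitPlane_of_norm_lt_one
    rw [norm_div, div_lt_one (norm_pos_iff.2 (hr0' z hz)), ← dist_eq_norm]
    exact hlt.trans_le (hmin hrz)
  refine ⟨fun z => Complex.exp (L z / 2) * Complex.exp (Complex.log (G z / G (r * z)) / 2),
    DiffContOnCl.mk_ball ?_ ?_, ?_⟩
  · have hq : DifferentiableOn ℂ (fun z => G z / G (r * z)) (ball 0 1) :=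
      hG.differentiableOn.div (hrd.mono (ball_subset_closedBall.trans hsub))
        (fun z hz => hr0' z (ball_subset_closedBall hz))
    have hlog := hq.clog (fun z hz => hslit z (ball_subset_closedBall hz))
    exact (((hL.mono (ball_subset_closedBall.trans hsub)).div_const 2).cexp).mul
      ((hlog.div_const 2).cexp)
  · have hq : ContinuousOn (fun z => G z / G (r * z)) (closedBall 0 1) :=
      hGc.div (hrd.continuousOn.mono hsub) hr0'
    have hlog := hq.clog hslit
    exact (((hL.continuousOn.mono hsub).div_const 2).cexp).mul ((hlog.div_const 2).cexp)
  · intro z hz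
    have hne : G z / G (r * z) ≠ 0 := div_ne_zero (h0 z hz) (hr0' z hz)
    rw [mul_pow, ← Complex.exp_nat_mul, ← Complex.exp_nat_mul]
    push_cast
    rw [mul_div_cancel₀ _ two_ne_zero, mul_div_cancel₀ _ two_ne_zero, Complex.exp_log hne,
      hLexp z (hsub hz), mul_div_cancel₀ _ (hr0' z hz)]

/-! ### Rigidity under equal boundary modulus -/

/-- Two zero-free functions in the disc algebra with the same modulus on the unit circle differ by
a constant factor: by the maximum principle, applied to both quotients, `X / E` has modulus `1`
throughout the disc. -/
theorem eq_const_mul_of_norm_eq {X E : ℂ → ℂ} (hX : DiffContOnCl ℂ X (ball 0 1))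
    (hE : DiffContOnCl ℂ E (ball 0 1)) (hX0 : ∀ z ∈ closedBall (0 : ℂ) 1, X z ≠ 0)
    (hE0 : ∀ z ∈ closedBall (0 : ℂ) 1, E z ≠ 0) (h : ∀ ζ : ℂ, ‖ζ‖ = 1 → ‖X ζ‖ = ‖E ζ‖) :
    ∀ z ∈ closedBall (0 : ℂ) 1, X z = X 1 / E 1 * E z := by
  have hquot : ∀ {A B : ℂ → ℂ}, DiffContOnCl ℂ A (ball 0 1) → DiffContOnCl ℂ B (ball 0 1) →
      (∀ z ∈ closedBall (0 : ℂ) 1, B z ≠ 0) → DiffContOnCl ℂ (fun z => A z / B z) (ball 0 1) :=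
    fun hA hB hB0 => DiffContOnCl.mk_ball
      (hA.differentiableOn.div hB.differentiableOn fun z hz => hB0 z (ball_subset_closedBall hz))
      (hA.continuousOn_ball.div hB.continuousOn_ball hB0)
  have hle : ∀ {A B : ℂ → ℂ}, DiffContOnCl ℂ A (ball 0 1) → DiffContOnCl ℂ B (ball 0 1) →
      (∀ z ∈ closedBall (0 : ℂ) 1, B z ≠ 0) → (∀ ζ : ℂ, ‖ζ‖ = 1 → ‖A ζ‖ = ‖B ζ‖) →
      ∀ z ∈ closedBall (0 : ℂ) 1, ‖A z‖ ≤ ‖B z‖ := by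
    intro A B hA hB hB0 hAB z hz
    have := Complex.norm_le_of_forall_mem_frontier_norm_le isBounded_ball (hquot hA hB hB0)
      (C := 1) (z := z) ?_ (by rwa [closure_ball _ one_ne_zero])
    · rwa [norm_div, div_le_one (norm_pos_iff.2 (hB0 z hz))] at this
    · intro ζ hζ
      rw [frontier_ball _ one_ne_zero, mem_sphere_zero_iff_norm] at hζ
      rw [norm_div, hAB ζ hζ]
      exact div_self_le_one _
  have hone : ∀ z ∈ closedBall (0 : ℂ) 1, ‖X z / E z‖ = 1 := by
    intro z hz
    rw [norm_div, (hle hX hE hE0 h z hz).antisymm (hle hE hX hX0 (fun ζ hζ => (h ζ hζ).symm) z hz),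
      div_self (norm_ne_zero_iff.2 (hE0 z hz))]
  have hmax : IsMaxOn (norm ∘ fun z => X z / E z) (ball (0 : ℂ) 1) 0 := by
    intro z hz
    simp only [mem_ofPred_eq, Function.comp_apply]
    rw [hone z (ball_subset_closedBall hz), hone 0 (by simp)]
  have hconst := Complex.eqOn_closure_of_isPreconnected_of_isMaxOn_norm
    (convex_ball (0 : ℂ) 1).isPreconnected isOpen_ball (hquot hX hE hE0) (mem_ball_self one_pos)
    hmax
  rw [closure_ball _ one_ne_zero] at hconst
  intro z hz
  have h1 := (hconst hz).trans (hconst (show (1 : ℂ) ∈ closedBall (0 : ℂ) 1 by simp)).symm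
  exact (div_eq_iff (hE0 z hz)).1 h1

/-! ### Blaschke factors and products -/

/-- The Blaschke factor `(z - a) / (1 - ā z)`: for `|a| < 1` it has a single simple zero, at `a`,
in the closed disc, and modulus `1` on the unit circle. -/
noncomputable def blaschke (a z : ℂ) : ℂ := (z - a) / (1 - (starRingEnd ℂ) a * z)

theorem blaschke_den_ne_zero {a z : ℂ} (ha : a ∈ ball (0 : ℂ) 1) (hz : z ∈ closedBall (0 : ℂ) 1) :
    1 - (starRingEnd ℂ) a * z ≠ 0 := by
  rw [mem_ball_zero_iff] at ha
  rw [mem_closedBall_zero_iff] at hz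
  intro h
  have h1 : ‖(starRingEnd ℂ) a * z‖ = 1 := by rw [← sub_eq_zero.1 h, norm_one]
  rw [norm_mul, RCLike.norm_conj] at h1
  nlinarith [norm_nonneg a]

theorem blaschke_eq_zero_iff {a z : ℂ} (ha : a ∈ ball (0 : ℂ) 1) (hz : z ∈ closedBall (0 : ℂ) 1) :
    blaschke a z = 0 ↔ z = a := by
  simp [blaschke, blaschke_den_ne_zero ha hz, sub_eq_zero]

theorem norm_blaschke {a ζ : ℂ} (ha : a ∈ ball (0 : ℂ) 1) (hζ : ‖ζ‖ = 1) : ‖blaschke a ζ‖ = 1 := by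
  have hden := blaschke_den_ne_zero ha (mem_closedBall_zero_iff.2 hζ.le)
  -- On the circle `1 - ā ζ = ζ * conj (ζ - a)`.
  have h1 : 1 - (starRingEnd ℂ) a * ζ = ζ * (starRingEnd ℂ) (ζ - a) := by
    rw [map_sub, mul_sub, Complex.mul_conj, Complex.normSq_eq_norm_sq, hζ]
    push_cast
    ring
  have h2 : ‖1 - (starRingEnd ℂ) a * ζ‖ = ‖ζ - a‖ := by
    rw [h1, norm_mul, hζ, RCLike.norm_conj, one_mul]
  rw [blaschke, norm_div, h2, div_self]
  rw [← h2]
  exact norm_ne_zero_iff.2 hden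

theorem diffContOnCl_mul {f h : ℂ → ℂ} (hf : DiffContOnCl ℂ f (ball 0 1))
    (hh : DiffContOnCl ℂ h (ball 0 1)) : DiffContOnCl ℂ (fun z => f z * h z) (ball 0 1) :=
  hf.smul hh

theorem diffContOnCl_blaschke {a : ℂ} (ha : a ∈ ball (0 : ℂ) 1) :
    DiffContOnCl ℂ (blaschke a) (ball 0 1) := by
  apply DifferentiableOn.diffContOnCl
  rw [closure_ball _ one_ne_zero]
  exact DifferentiableOn.div (by fun_prop) (by fun_prop) fun z hz => blaschke_den_ne_zero ha hz

/-- The finite Blaschke product with zeros `t j`, for `j ∈ S`. -/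
noncomputable def blaschkeProd {ι : Type*} (t : ι → ℂ) (S : Finset ι) (z : ℂ) : ℂ :=
  ∏ j ∈ S, blaschke (t j) z

section BlaschkeProd

variable {ι : Type*} {t : ι → ℂ}

theorem blaschkeProd_eq_zero_iff (htD : ∀ j, t j ∈ ball (0 : ℂ) 1) (S : Finset ι) {z : ℂ}
    (hz : z ∈ closedBall (0 : ℂ) 1) : blaschkeProd t S z = 0 ↔ ∃ j ∈ S, z = t j := by
  simp only [blaschkeProd, Finset.prod_eq_zero_iff, blaschke_eq_zero_iff (htD _) hz]

theorem norm_blaschkeProd (htD : ∀ j, t j ∈ ball (0 : ℂ) 1) (S : Finset ι) {ζ : ℂ}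
    (hζ : ‖ζ‖ = 1) : ‖blaschkeProd t S ζ‖ = 1 := by
  rw [blaschkeProd, norm_prod]
  exact Finset.prod_eq_one fun j _ => norm_blaschke (htD j) hζ

theorem diffContOnCl_blaschkeProd (htD : ∀ j, t j ∈ ball (0 : ℂ) 1) (S : Finset ι) :
    DiffContOnCl ℂ (blaschkeProd t S) (ball 0 1) := by
  classical
  induction S using Finset.induction_on with
  | empty =>
    have : blaschkeProd t ∅ = fun _ => 1 := by ext; simp [blaschkeProd]
    rw [this]
    exact diffContOnCl_const
  | insert j S hj ih =>
    have : blaschkeProd t (insert j S) = fun z => blaschke (t j) z * blaschkeProd t S z := by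
      ext z; simp [blaschkeProd, Finset.prod_insert hj]
    rw [this]
    exact diffContOnCl_mul (diffContOnCl_blaschke (htD j)) ih

/-- A zero at `a` can be divided out by the Blaschke factor without leaving the disc algebra. -/
theorem exists_eq_blaschke_mul {a : ℂ} (ha : a ∈ ball (0 : ℂ) 1) {f : ℂ → ℂ}
    (hf : DiffContOnCl ℂ f (ball 0 1)) (hfa : f a = 0) :
    ∃ F : ℂ → ℂ, DiffContOnCl ℂ F (ball 0 1) ∧
      ∀ z ∈ closedBall (0 : ℂ) 1, f z = blaschke a z * F z := by
  have hnhds : ball (0 : ℂ) 1 ∈ nhds a := isOpen_ball.mem_nhds ha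
  have hd : DiffContOnCl ℂ (dslope f a) (ball 0 1) :=
    DiffContOnCl.mk_ball ((Complex.differentiableOn_dslope hnhds).2 hf.differentiableOn)
      ((continuousOn_dslope (Filter.mem_of_superset hnhds ball_subset_closedBall)).2
        ⟨hf.continuousOn_ball, hf.differentiableAt isOpen_ball ha⟩)
  refine ⟨fun z => dslope f a z * (1 - (starRingEnd ℂ) a * z), diffContOnCl_mul hd
    (Differentiable.diffContOnCl (by fun_prop)), fun z hz => ?_⟩
  have h := sub_smul_dslope f a z
  rw [hfa, sub_zero, smul_eq_mul] at h
  rw [blaschke, ← h]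
  have := blaschke_den_ne_zero ha hz
  rw [div_mul_eq_mul_div, eq_div_iff this]
  ring

theorem exists_eq_blaschkeProd_mul (ht : Function.Injective t)
    (htD : ∀ j, t j ∈ ball (0 : ℂ) 1) (S : Finset ι) {f : ℂ → ℂ}
    (hf : DiffContOnCl ℂ f (ball 0 1)) (hfS : ∀ j ∈ S, f (t j) = 0) :
    ∃ F : ℂ → ℂ, DiffContOnCl ℂ F (ball 0 1) ∧
      ∀ z ∈ closedBall (0 : ℂ) 1, f z = blaschkeProd t S z * F z := by
  classical
  induction S using Finset.induction_on generalizing f with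
  | empty => exact ⟨f, hf, fun z _ => by simp [blaschkeProd]⟩
  | insert j S hj ih =>
    obtain ⟨F₁, hF₁, h₁⟩ := exists_eq_blaschke_mul (htD j) hf (hfS j (Finset.mem_insert_self j S))
    obtain ⟨F, hF, h⟩ := ih hF₁ fun i hi => by
      have hti := ball_subset_closedBall (htD i)
      have h0 := hfS i (Finset.mem_insert_of_mem hi)
      rw [h₁ _ hti, mul_eq_zero, blaschke_eq_zero_iff (htD j) hti] at h0
      exact h0.resolve_left fun hij => hj (ht hij ▸ hi)
    refine ⟨F, hF, fun z hz => ?_⟩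
    rw [h₁ z hz, h z hz, ← mul_assoc]
    simp only [blaschkeProd, Finset.prod_insert hj]

/-- A Blaschke product can be cancelled from an identity between disc algebra functions, even at
its zeros. -/
theorem eq_of_blaschkeProd_mul_eq (ht : Function.Injective t) (htD : ∀ j, t j ∈ ball (0 : ℂ) 1)
    (S : Finset ι) {f h : ℂ → ℂ} (hf : DiffContOnCl ℂ f (ball 0 1))
    (hh : DiffContOnCl ℂ h (ball 0 1))
    (heq : ∀ z ∈ closedBall (0 : ℂ) 1, blaschkeProd t S z * f z = blaschkeProd t S z * h z) :
    ∀ z ∈ closedBall (0 : ℂ) 1, f z = h z := by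
  classical
  intro z hz
  by_cases hB : blaschkeProd t S z = 0
  swap
  · exact mul_left_cancel₀ hB (heq z hz)
  obtain ⟨j, hj, rfl⟩ := (blaschkeProd_eq_zero_iff htD S hz).1 hB
  -- Near `t j` the product vanishes only at `t j`, so continuity propagates the equality.
  have hfc : ContinuousAt f (t j) := (hf.differentiableAt isOpen_ball (htD j)).continuousAt
  have hhc : ContinuousAt h (t j) := (hh.differentiableAt isOpen_ball (htD j)).continuousAt
  refine ((hfc.eventuallyEq_nhds_iff_eventuallyEq_nhdsNE hhc).1 ?_).eq_of_nhds
  have hfin : ((S.erase j).image t : Set ℂ)ᶜ ∈ nhds (t j) := by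
    refine ((Finset.finite_toSet _).isClosed.isOpen_compl).mem_nhds ?_
    simp only [Finset.coe_image, mem_compl_iff, mem_image, Finset.coe_erase, not_exists]
    rintro i ⟨hi, hij⟩
    exact hi.2 (ht hij)
  filter_upwards [nhdsWithin_le_nhds hfin, nhdsWithin_le_nhds (isOpen_ball.mem_nhds (htD j)),
    self_mem_nhdsWithin] with w hw hwb hwj
  have hwc := ball_subset_closedBall hwb
  refine mul_left_cancel₀ (fun h0 => ?_) (heq w hwc)
  obtain ⟨i, hi, rfl⟩ := (blaschkeProd_eq_zero_iff htD S hwc).1 h0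
  refine hw ?_
  simp only [Finset.coe_image, mem_image, Finset.coe_erase]
  exact ⟨i, ⟨hi, fun hij => hwj (by rw [mem_singleton_iff.1 hij]; rfl)⟩, rfl⟩

end BlaschkeProd

/-! ### Factorisation of `g` and counting of the lifts -/

/-- Simplicity of the zeros makes the cofactor of the full Blaschke product in `g` zero-free, hence
a square. -/
theorem exists_eq_blaschkeProd_mul_sq {ι : Type*} [Fintype ι] {t : ι → ℂ}
    (ht : Function.Injective t) (htD : ∀ j, t j ∈ ball (0 : ℂ) 1)
    {g : ℂ → ℂ} (hg : DiffContOnCl ℂ g (ball 0 1))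
    (hzero : ∀ z ∈ closedBall (0 : ℂ) 1, (g z = 0 ↔ ∃ j, z = t j))
    (hsimple : ∀ j, deriv g (t j) ≠ 0) :
    ∃ E : ℂ → ℂ, DiffContOnCl ℂ E (ball 0 1) ∧ (∀ z ∈ closedBall (0 : ℂ) 1, E z ≠ 0) ∧
      ∀ z ∈ closedBall (0 : ℂ) 1, g z = blaschkeProd t Finset.univ z * E z ^ 2 := by
  obtain ⟨G, hG, hgG⟩ := exists_eq_blaschkeProd_mul ht htD Finset.univ hg
    fun j _ => (hzero _ (ball_subset_closedBall (htD j))).2 ⟨j, rfl⟩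
  have hG0 : ∀ z ∈ closedBall (0 : ℂ) 1, G z ≠ 0 := by
    intro z hz hGz
    obtain ⟨j, rfl⟩ := (hzero z hz).1 (by rw [hgG z hz, hGz, mul_zero])
    -- Both factors of `g = B * G` vanish at `t j`, so its derivative vanishes there.
    refine hsimple j ?_
    have hB0 := (blaschkeProd_eq_zero_iff htD Finset.univ hz).2 ⟨j, Finset.mem_univ j, rfl⟩
    have hev : g =ᶠ[nhds (t j)] fun z => blaschkeProd t Finset.univ z * G z := by
      filter_upwards [isOpen_ball.mem_nhds (htD j)] with w hw
      exact hgG w (ball_subset_closedBall hw)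
    have hBd := (diffContOnCl_blaschkeProd htD Finset.univ).differentiableAt isOpen_ball (htD j)
    have hGd := hG.differentiableAt isOpen_ball (htD j)
    have hd := (hBd.hasDerivAt.mul hGd.hasDerivAt).congr_of_eventuallyEq hev
    rw [hd.deriv, hGz, hB0, mul_zero, zero_mul, add_zero]
  obtain ⟨E, hE, hEG⟩ := exists_sqrt hG hG0
  refine ⟨E, hE, fun z hz h => hG0 z hz ?_, fun z hz => ?_⟩
  · rw [← hEG z hz, h, zero_pow two_ne_zero]
  · rw [hgG z hz, hEG z hz]

/-- The complex-analytic content of the second part of Lemma 3.7 of the paper: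
if `g` is continuous on the closed unit disc, holomorphic on the open unit disc, with
zero set exactly the `k` distinct points `t₁, …, t_k` of the open disc, each zero simple,
and `x₀` satisfies `|x₀|² = |g(1)|`, then there are exactly `2^k` pairs `(x,y)` of
functions on the closed disc, continuous there and holomorphic on the open disc, with
`x·y = g`, `|x| = |y|` on the unit circle, and `x(1) = x₀`. -/
theorem lifts_count (k : ℕ) (t : Fin k → ℂ) (ht : Function.Injective t)
    (htD : ∀ j, t j ∈ Metric.ball (0 : ℂ) 1)
    (g : ℂ → ℂ)
    (hgc : ContinuousOn g (Metric.closedBall 0 1))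
    (hgd : DifferentiableOn ℂ g (Metric.ball 0 1))
    (hzero : ∀ z ∈ Metric.closedBall (0 : ℂ) 1, (g z = 0 ↔ ∃ j, z = t j))
    (hsimple : ∀ j, deriv g (t j) ≠ 0)
    (x₀ : ℂ) (hx₀ : ‖x₀‖ ^ 2 = ‖g 1‖) :
    Set.ncard {p : (Metric.closedBall (0 : ℂ) 1 → ℂ) × (Metric.closedBall (0 : ℂ) 1 → ℂ) |
      ∃ x y : ℂ → ℂ,
        ContinuousOn x (Metric.closedBall 0 1) ∧ DifferentiableOn ℂ x (Metric.ball 0 1) ∧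
        ContinuousOn y (Metric.closedBall 0 1) ∧ DifferentiableOn ℂ y (Metric.ball 0 1) ∧
        (∀ z ∈ Metric.closedBall (0 : ℂ) 1, x z * y z = g z) ∧
        (∀ ζ : ℂ, ‖ζ‖ = 1 → ‖x ζ‖ = ‖y ζ‖) ∧
        x 1 = x₀ ∧
        p = ((Metric.closedBall (0 : ℂ) 1).restrict x,
             (Metric.closedBall (0 : ℂ) 1).restrict y)} = 2 ^ k := by
  obtain ⟨E, hE, hE0, hgE⟩ := exists_eq_blaschkeProd_mul_sq ht htD
    (DiffContOnCl.mk_ball hgd hgc) hzero hsimple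
  have h1 : (1 : ℂ) ∈ closedBall (0 : ℂ) 1 := by simp
  have hB1 : ∀ S, blaschkeProd t S 1 ≠ 0 := fun S h => by
    simpa [h] using norm_blaschkeProd htD S norm_one
  have hnorm : ‖x₀‖ = ‖E 1‖ := by
    rw [hgE 1 h1, norm_mul, norm_blaschkeProd htD _ norm_one, one_mul, norm_pow] at hx₀
    exact (pow_left_inj₀ (norm_nonneg _) (norm_nonneg _) two_ne_zero).1 hx₀
  have hx₀0 : x₀ ≠ 0 := norm_ne_zero_iff.1 (hnorm ▸ norm_ne_zero_iff.2 (hE0 1 h1))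
  have hBB : ∀ (S : Finset (Fin k)) z,
      blaschkeProd t S z * blaschkeProd t Sᶜ z = blaschkeProd t Finset.univ z :=
    fun S z => Finset.prod_mul_prod_compl S _
  -- The unimodular constant that enforces `x 1 = x₀`.
  set c : Finset (Fin k) → ℂ := fun S => x₀ / blaschkeProd t S 1 / E 1 with hc
  have hc0 : ∀ S, c S ≠ 0 := fun S => div_ne_zero (div_ne_zero hx₀0 (hB1 S)) (hE0 1 h1)
  have hcn : ∀ S, ‖c S‖ = 1 := fun S => by
    rw [hc]
    simp only [norm_div]
    rw [norm_blaschkeProd htD S norm_one, hnorm, div_one,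
      div_self (norm_ne_zero_iff.2 (hE0 1 h1))]
  let X : Finset (Fin k) → ℂ → ℂ := fun S z => blaschkeProd t S z * (c S * E z)
  let Y : Finset (Fin k) → ℂ → ℂ := fun S z => blaschkeProd t Sᶜ z * ((c S)⁻¹ * E z)
  let Φ : Finset (Fin k) → (closedBall (0 : ℂ) 1 → ℂ) × (closedBall (0 : ℂ) 1 → ℂ) :=
    fun S => ((closedBall (0 : ℂ) 1).domRestrict (X S), (closedBall (0 : ℂ) 1).domRestrict (Y S))
  have hXd : ∀ S, DiffContOnCl ℂ (X S) (ball 0 1) := fun S =>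
    diffContOnCl_mul (diffContOnCl_blaschkeProd htD S) (diffContOnCl_mul diffContOnCl_const hE)
  have hYd : ∀ S, DiffContOnCl ℂ (Y S) (ball 0 1) := fun S =>
    diffContOnCl_mul (diffContOnCl_blaschkeProd htD Sᶜ) (diffContOnCl_mul diffContOnCl_const hE)
  have hΦ : Function.Injective Φ := by
    -- `S` is recovered as the set of indices `j` with `X S (t j) = 0`.
    have hmem : ∀ S j, X S (t j) = 0 ↔ j ∈ S := fun S j => by
      have htj := ball_subset_closedBall (htD j)
      have : c S * E (t j) ≠ 0 := mul_ne_zero (hc0 S) (hE0 _ htj)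
      simp only [X, mul_eq_zero, this, or_false, blaschkeProd_eq_zero_iff htD S htj]
      exact ⟨fun ⟨i, hi, h⟩ => ht h ▸ hi, fun h => ⟨j, h, rfl⟩⟩
    intro S T hST
    ext j
    have h : X S (t j) = X T (t j) :=
      congrFun (congrArg Prod.fst hST) ⟨t j, ball_subset_closedBall (htD j)⟩
    rw [← hmem S j, ← hmem T j, h]
  refine (congrArg Set.ncard (a₂ := Set.range Φ) ?_).trans
    (by rw [Set.ncard_range_of_injective hΦ]; simp)
  ext p
  constructor
  · rintro ⟨x, y, hxc, hxd, hyc, hyd, hxy, hn, hx1, rfl⟩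
    let S : Finset (Fin k) := Finset.univ.filter fun j => x (t j) = 0
    have hyS : ∀ j ∈ Sᶜ, y (t j) = 0 := fun j hj => by
      have htj := ball_subset_closedBall (htD j)
      have h0 := hxy _ htj
      rw [(hzero _ htj).2 ⟨j, rfl⟩, mul_eq_zero] at h0
      exact h0.resolve_left (by simpa [S] using hj)
    obtain ⟨A, hA, hxA⟩ := exists_eq_blaschkeProd_mul ht htD S (DiffContOnCl.mk_ball hxd hxc)
      fun j hj => by simpa [S] using hj
    obtain ⟨B, hB, hyB⟩ := exists_eq_blaschkeProd_mul ht htD Sᶜ (DiffContOnCl.mk_ball hyd hyc) hyS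
    have hAB : ∀ z ∈ closedBall (0 : ℂ) 1, A z * B z = E z * E z :=
      eq_of_blaschkeProd_mul_eq ht htD Finset.univ (diffContOnCl_mul hA hB)
        (diffContOnCl_mul hE hE) fun z hz => by
          rw [← sq (E z), ← hgE z hz, ← hxy z hz, hxA z hz, hyB z hz, ← hBB S z]
          ring
    have hA0 : ∀ z ∈ closedBall (0 : ℂ) 1, A z ≠ 0 := fun z hz h =>
      mul_ne_zero (hE0 z hz) (hE0 z hz) (by rw [← hAB z hz, h, zero_mul])
    have hAE : ∀ ζ : ℂ, ‖ζ‖ = 1 → ‖A ζ‖ = ‖E ζ‖ := fun ζ hζ => by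
      have hζc : ζ ∈ closedBall (0 : ℂ) 1 := mem_closedBall_zero_iff.2 hζ.le
      have h2 := hn ζ hζ
      rw [hxA ζ hζc, hyB ζ hζc, norm_mul, norm_mul, norm_blaschkeProd htD _ hζ,
        norm_blaschkeProd htD _ hζ, one_mul, one_mul] at h2
      have h3 := congrArg norm (hAB ζ hζc)
      rw [norm_mul, norm_mul, ← h2] at h3
      exact (mul_self_inj (norm_nonneg _) (norm_nonneg _)).1 h3
    have hA1 : A 1 = x₀ / blaschkeProd t S 1 := by
      rw [eq_div_iff (hB1 S), mul_comm, ← hxA 1 h1, hx1]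
    have hAc : ∀ z ∈ closedBall (0 : ℂ) 1, A z = c S * E z := fun z hz => by
      rw [eq_const_mul_of_norm_eq hA hE hA0 hE0 hAE z hz, hA1]
    refine ⟨S, Prod.ext (funext fun z => ?_) (funext fun z => ?_)⟩
    · change blaschkeProd t S z * (c S * E z) = x z
      rw [hxA z z.2, hAc z z.2]
    · change blaschkeProd t Sᶜ z * ((c S)⁻¹ * E z) = y z
      rw [hyB z z.2]
      congr 1
      refine mul_left_cancel₀ (hA0 z z.2) ?_
      rw [hAB z z.2, hAc z z.2]
      field_simp [hc0 S]
  · rintro ⟨S, rfl⟩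
    refine ⟨X S, Y S, (hXd S).continuousOn_ball, (hXd S).differentiableOn,
      (hYd S).continuousOn_ball, (hYd S).differentiableOn, fun z hz => ?_, fun ζ hζ => ?_, ?_, rfl⟩
    · rw [hgE z hz, ← hBB S z]
      simp only [X, Y]
      field_simp [hc0 S]
    · simp only [X, Y, norm_mul, norm_inv, hcn, norm_blaschkeProd htD _ hζ, inv_one]
    · simp only [X, hc]
      field_simp [hB1 S, hE0 1 h1]
end
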